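/- There exist a prime p₀ > 3 and a constant C > 0 with the following property. Let p ≥ p₀ be a prime and let c_1,…,c_16, d_1,…,d_16 be integers such that: (a) if p ≡ 1 (mod 3), then for every (λ,μ) ∈ (ℤ/pℤ)² with (λ,μ) ≠ (0,0) the number of indices i with λc_i + μd_i ≡ 0 (mod p) is at most 9; and (b) if p ≡ 2 (mod 3), then there exist indices i, j, k such that c_id_j − c_jd_i, c_id_k − c_kd_i and c_jd_k − c_kd_j are all nonzero modulo p. Then for every integer k ≥ 1, ρ(p^k) ≥ p^{14k}·(1 − C/p). -/

import Mathlib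

open Finset in
theorem aux_split {R : Type*} [AddCommMonoid R] (f : Fin 16 → R) {i j : Fin 16} (h : i ≠ j) :
    ∑ l, f l = f i + f j + ∑ l ∈ (univ.erase i).erase j, f l := by
  rw [← Finset.add_sum_erase univ f (mem_univ i), ← Finset.add_sum_erase (univ.erase i) f
    (Finset.mem_erase.2 ⟨h.symm, mem_univ j⟩), add_assoc]

theorem aux_cube_lift {p k : ℕ} (hp : p.Prime) (h3 : 3 < p)
    (φ : ZMod (p ^ (k+1)) →+* ZMod p) (hφ : ∀ z, φ z = 0 → (p : ZMod (p ^ (k+1))) ∣ z)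
    (hsurj : Function.Surjective φ) (hunit : ∀ z, φ z ≠ 0 → IsUnit z)
    (u : ZMod (p ^ (k+1))) (a : ZMod p) (ha : a ≠ 0)
    (hu : φ u = a ^ 3) : ∃ X, φ X = a ∧ X ^ 3 = u := by
  have : Fact p.Prime := ⟨hp⟩
  obtain ⟨b, rfl⟩ := hsurj a
  obtain ⟨b, rfl⟩ := hunit _ ha
  -- v = u / b^3
  set v : ZMod (p ^ (k+1)) := u * ((b⁻¹ : (ZMod (p ^ (k+1)))ˣ) : ZMod (p ^ (k+1))) ^ 3 with hv
  have hbb : φ (b : ZMod (p ^ (k+1))) * φ ((b⁻¹ : (ZMod (p ^ (k+1)))ˣ) : ZMod (p ^ (k+1))) = 1 := by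
    rw [← map_mul]; simp
  have hv1 : φ v = 1 := by
    rw [hv, map_mul, map_pow, hu, ← mul_pow, hbb, one_pow]
  have hdvd : (p : ZMod (p ^ (k+1))) ∣ v - 1 := hφ _ (by simp [hv1])
  have hpow : v ^ (p ^ k) = 1 := by
    have := dvd_sub_pow_of_dvd_sub hdvd k
    have h0 : ((p : ZMod (p ^ (k+1))) ^ (k+1)) = 0 := by
      have := ZMod.natCast_self (p ^ (k+1))
      push_cast at this; exact this
    rw [h0, zero_dvd_iff, one_pow, sub_eq_zero] at this
    exact this
  have hcop : Nat.Coprime 3 (p ^ k) := by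
    apply Nat.Coprime.pow_right
    rw [Nat.coprime_primes Nat.prime_three hp]; omega
  obtain ⟨m, hm⟩ : ∃ m, v ^ (m * 3) = v := by
    have hmod : 3 * (3 : ZMod (p^k))⁻¹.val ≡ 1 [MOD p ^ k] := by
      rw [← ZMod.natCast_eq_natCast_iff]
      have : NeZero (p ^ k) := ⟨(pow_pos hp.pos k).ne'⟩
      push_cast
      rw [ZMod.natCast_zmod_val]
      exact ZMod.coe_mul_inv_eq_one 3 hcop
    refine ⟨(3 : ZMod (p^k))⁻¹.val, ?_⟩
    rw [mul_comm]
    refine Eq.trans ?_ (pow_one v)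
    rw [← pow_mod_orderOf v (3 * _), ← pow_mod_orderOf v 1, (hmod.of_dvd (orderOf_dvd_of_pow_eq_one hpow) : _ % _ = _ % _)]
  refine ⟨b * v ^ m, ?_, ?_⟩
  · rw [map_mul, map_pow, hv1, one_pow, mul_one]
  · rw [mul_pow, ← pow_mul, hm, hv]
    have : (b : ZMod (p ^ (k+1))) ^ 3 * (u * ((b⁻¹ : (ZMod (p ^ (k+1)))ˣ) : ZMod (p ^ (k+1))) ^ 3)
      = u * ((b : ZMod (p ^ (k+1))) * ((b⁻¹ : (ZMod (p ^ (k+1)))ˣ) : ZMod (p ^ (k+1)))) ^ 3 := by ring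
    rw [this]; simp

open Finset in
theorem aux_solve {p k : ℕ} (hp : p.Prime) (h3 : 3 < p)
    (φ : ZMod (p ^ (k+1)) →+* ZMod p) (hφ : ∀ z, φ z = 0 → (p : ZMod (p ^ (k+1))) ∣ z)
    (hsurj : Function.Surjective φ) (hunit : ∀ z, φ z ≠ 0 → IsUnit z)
    (c d : Fin 16 → ℤ) (x0 : Fin 16 → ZMod p) (y : Fin 16 → ZMod (p ^ (k+1)))
    (hyφ : ∀ l, φ (y l) = x0 l)
    (hF : (∑ i, (c i : ZMod p) * x0 i ^ 3) = 0) (hG : (∑ i, (d i : ZMod p) * x0 i ^ 3) = 0)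
    {i j : Fin 16} (hij : i ≠ j) (hdet : ((c i * d j - c j * d i : ℤ) : ZMod p) ≠ 0)
    (hi : x0 i ≠ 0) (hj : x0 j ≠ 0) :
    ∃ X Y, φ X = x0 i ∧ φ Y = x0 j ∧
      (∑ l, (c l : ZMod (p ^ (k+1))) * (Function.update (Function.update y i X) j Y) l ^ 3) = 0 ∧
      (∑ l, (d l : ZMod (p ^ (k+1))) * (Function.update (Function.update y i X) j Y) l ^ 3) = 0 := by
  set A := ∑ l ∈ (univ.erase i).erase j, (c l : ZMod (p ^ (k+1))) * y l ^ 3 with hA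
  set B := ∑ l ∈ (univ.erase i).erase j, (d l : ZMod (p ^ (k+1))) * y l ^ 3 with hB
  have hAφ : φ A = ∑ l ∈ (univ.erase i).erase j, (c l : ZMod p) * x0 l ^ 3 := by
    simp [hA, map_sum, hyφ]
  have hBφ : φ B = ∑ l ∈ (univ.erase i).erase j, (d l : ZMod p) * x0 l ^ 3 := by
    simp [hB, map_sum, hyφ]
  rw [aux_split _ hij, ← hAφ] at hF
  rw [aux_split _ hij, ← hBφ] at hG
  have hDφ : φ ((c i * d j - c j * d i : ℤ) : ZMod (p ^ (k+1))) = ((c i * d j - c j * d i : ℤ) : ZMod p) :=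
    map_intCast _ _
  obtain ⟨D, hD⟩ := hunit ((c i * d j - c j * d i : ℤ) : ZMod (p ^ (k+1))) (by rw [hDφ]; exact hdet)
  set E : ZMod (p ^ (k+1)) := ((D⁻¹ : (ZMod (p ^ (k+1)))ˣ) : ZMod (p ^ (k+1))) with hE
  have hDE : ((c i : ZMod (p ^ (k+1))) * d j - c j * d i) * E = 1 := by
    have : (D : ZMod (p ^ (k+1))) * E = 1 := by simp [hE]
    rw [hD] at this; push_cast at this; exact this
  have hDEφ : ((c i : ZMod p) * d j - c j * d i) * φ E = 1 := by
    have := congrArg φ hDE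
    simpa using this
  obtain ⟨X, hX, hX3⟩ := aux_cube_lift hp h3 φ hφ hsurj hunit
    ((B * c j - A * d j) * E) (x0 i) hi (by
      simp only [map_mul, map_sub, map_intCast]
      linear_combination (x0 i ^ 3) * hDEφ + ((c j : ZMod p) * φ E) * hG - ((d j : ZMod p) * φ E) * hF)
  obtain ⟨Y, hY, hY3⟩ := aux_cube_lift hp h3 φ hφ hsurj hunit
    ((A * d i - B * c i) * E) (x0 j) hj (by
      simp only [map_mul, map_sub, map_intCast]
      linear_combination (x0 j ^ 3) * hDEφ + ((d i : ZMod p) * φ E) * hF - ((c i : ZMod p) * φ E) * hG)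
  have hrest : ∀ e : Fin 16 → ℤ, ∑ l, (e l : ZMod (p ^ (k+1))) *
      (Function.update (Function.update y i X) j Y) l ^ 3 = e i * X ^ 3 + e j * Y ^ 3 +
      ∑ l ∈ (univ.erase i).erase j, (e l : ZMod (p ^ (k+1))) * y l ^ 3 := by
    intro e
    rw [aux_split _ hij]
    congr 1
    · simp [hij]
    · refine Finset.sum_congr rfl fun l hl => ?_
      have h1 := Finset.ne_of_mem_erase hl
      have h2 := Finset.ne_of_mem_erase (Finset.mem_of_mem_erase hl)
      simp [h1, h2]
  refine ⟨X, Y, hX, hY, ?_, ?_⟩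
  · rw [hrest, ← hA, hX3, hY3]
    linear_combination (-A) * hDE
  · rw [hrest, ← hB, hX3, hY3]
    linear_combination (-B) * hDE

/-- nonsingular solutions mod p -/
def AuxNS (p : ℕ) (c d : Fin 16 → ℤ) (x : Fin 16 → ZMod p) : Prop :=
  (∑ i, (c i : ZMod p) * x i ^ 3) = 0 ∧ (∑ i, (d i : ZMod p) * x i ^ 3) = 0 ∧
  ∃ i j, ((c i * d j - c j * d i : ℤ) : ZMod p) ≠ 0 ∧ x i ≠ 0 ∧ x j ≠ 0

open Finset Classical in
theorem aux_hensel {p k : ℕ} (hp : p.Prime) (h3 : 3 < p) (c d : Fin 16 → ℤ) :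
    (p ^ k) ^ 14 * Nat.card {x // AuxNS p c d x} ≤
      Nat.card {x : Fin 16 → ZMod (p ^ (k+1)) //
                (∑ i, (c i : ZMod (p ^ (k+1))) * x i ^ 3) = 0 ∧
                (∑ i, (d i : ZMod (p ^ (k+1))) * x i ^ 3) = 0} := by
  have : Fact p.Prime := ⟨hp⟩
  have : NeZero (p ^ (k+1)) := ⟨(pow_pos hp.pos _).ne'⟩
  have hd : p ∣ p ^ (k+1) := dvd_pow_self p (by omega)
  let φ : ZMod (p ^ (k+1)) →+* ZMod p := ZMod.castHom hd (ZMod p)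
  have hsurj : Function.Surjective φ := ZMod.castHom_surjective hd
  have hφ : ∀ z, φ z = 0 → (p : ZMod (p ^ (k+1))) ∣ z := by
    intro z hz
    rw [← ZMod.natCast_zmod_val z] at hz ⊢
    rw [map_natCast, ZMod.natCast_eq_zero_iff] at hz
    exact Nat.cast_dvd_cast hz
  have hunit : ∀ z, φ z ≠ 0 → IsUnit z := by
    intro z hz
    rw [← ZMod.natCast_zmod_val z] at hz ⊢
    rw [map_natCast, Ne, ZMod.natCast_eq_zero_iff] at hz
    rw [ZMod.isUnit_iff_coprime]
    exact Nat.Coprime.pow_right _ ((Nat.Prime.coprime_iff_not_dvd hp).2 hz).symm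
  have hfib : ∀ a, #{z | φ z = a} = p ^ k := by
    have heq : ∀ a, #{z | φ z = a} = #{z | φ z = 0} := fun a =>
      AddMonoidHom.card_fiber_eq_of_mem_range φ.toAddMonoidHom (hsurj a) (hsurj 0)
    have hs := Finset.card_eq_sum_card_fiberwise (f := φ) (s := univ) (t := univ) (by simp)
    rw [Finset.sum_congr rfl (fun a _ => heq a)] at hs
    simp only [card_univ, ZMod.card, sum_const, smul_eq_mul] at hs
    intro a
    rw [heq a]
    exact (Nat.eq_of_mul_eq_mul_left hp.pos ((pow_succ' p k).symm.trans hs)).symm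
  choose lift hlift using hsurj
  rw [Nat.card_eq_fintype_card, Nat.card_eq_fintype_card, Fintype.card_subtype, Fintype.card_subtype]
  rw [mul_comm]
  refine le_trans ?_ (Finset.card_le_card (s := univ.filter fun x : Fin 16 → ZMod (p ^ (k+1)) =>
    ((∑ i, (c i : ZMod (p ^ (k+1))) * x i ^ 3) = 0 ∧
      (∑ i, (d i : ZMod (p ^ (k+1))) * x i ^ 3) = 0) ∧ AuxNS p c d (fun i => φ (x i))) ?_)
  swap
  · intro x hx
    simp only [mem_filter, mem_univ, true_and] at hx ⊢
    exact hx.1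
  rw [mul_comm]
  refine Finset.mul_card_image_le_card_of_maps_to (f := fun x i => φ (x i)) ?_ _ ?_
  · intro x hx
    simp only [mem_filter, mem_univ, true_and] at hx ⊢
    exact hx.2
  intro x0 hx0
  simp only [mem_filter, mem_univ, true_and] at hx0
  have hNS := hx0
  obtain ⟨hF, hG, i, j, hdet, hi, hj⟩ := hx0
  have hij : i ≠ j := by
    rintro rfl; simp at hdet
  set L : Fin 16 → ZMod (p ^ (k+1)) := fun l => lift (x0 l) with hL
  let T : Finset (Fin 16 → ZMod (p ^ (k+1))) :=
    Fintype.piFinset fun l => if l = i ∨ l = j then {L l} else univ.filter (fun z => φ z = x0 l)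
  have hT : #T = (p ^ k) ^ 14 := by
    rw [Fintype.card_piFinset]
    have : ∀ l, #(if l = i ∨ l = j then {L l} else univ.filter (fun z => φ z = x0 l)) =
        if l ∈ ({i, j} : Finset (Fin 16)) then 1 else p ^ k := by
      intro l
      simp only [mem_insert, mem_singleton]
      split_ifs
      · simp
      · exact hfib _
    rw [Finset.prod_congr rfl fun l _ => this l, Finset.prod_ite, Finset.prod_const_one, one_mul,
      Finset.prod_const]
    congr 1
    rw [Finset.filter_not, Finset.card_sdiff_of_subset (Finset.filter_subset _ _)]
    rw [Finset.filter_mem_eq_inter, Finset.univ_inter, Finset.card_pair hij]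
    simp
  rw [← hT]
  apply Finset.card_le_card_of_surjOn
    (fun x => Function.update (Function.update x i (L i)) j (L j))
  intro y hy
  have hy' : ∀ l, y l ∈ if l = i ∨ l = j then {L l} else univ.filter (fun z => φ z = x0 l) :=
    Fintype.mem_piFinset.1 hy
  have hyi : y i = L i := by simpa using hy' i
  have hyj : y j = L j := by simpa using hy' j
  have hyφ : ∀ l, φ (y l) = x0 l := by
    intro l
    by_cases hl : l = i ∨ l = j
    · rcases hl with rfl | rfl
      · rw [hyi, hL]; exact hlift _
      · rw [hyj, hL]; exact hlift _
    · simpa [hl] using hy' l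
  obtain ⟨X, Y, hX, hY, h1, h2⟩ := aux_solve hp h3 φ hφ (fun a => ⟨lift a, hlift a⟩) hunit c d x0 y hyφ
    hF hG hij hdet hi hj
  refine ⟨Function.update (Function.update y i X) j Y, ?_, ?_⟩
  · have hφx : (fun l => φ (Function.update (Function.update y i X) j Y l)) = x0 := by
      funext l
      by_cases hlj : l = j
      · subst hlj; simp [hY]
      · by_cases hli : l = i
        · subst hli; simp [hlj, hX]
        · simp [hlj, hli, hyφ]
    simp only [coe_filter, mem_filter, mem_univ, true_and]
    refine ⟨⟨⟨h1, h2⟩, ?_⟩, hφx⟩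
    rw [hφx]; exact hNS
  · funext l
    by_cases hlj : l = j
    · subst hlj; simp [hyj]
    · by_cases hli : l = i
      · subst hli; simp [hlj, hyi]
      · simp [hlj, hli]

open Finset Classical in
theorem aux_cube_fiber {p : ℕ} [Fact p.Prime] (a : ZMod p) : #{u : ZMod p | u ^ 3 = a} ≤ 3 := by
  calc #{u : ZMod p | u ^ 3 = a} ≤ (Polynomial.nthRoots 3 a).toFinset.card := by
        apply Finset.card_le_card
        intro u hu
        simpa [Polynomial.mem_nthRoots] using hu
    _ ≤ Multiset.card (Polynomial.nthRoots 3 a) := Multiset.toFinset_card_le _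
    _ ≤ 3 := Polynomial.card_nthRoots 3 a

noncomputable def AuxS (p : ℕ) [Fact p.Prime] (t : ZMod p) : ℂ := ∑ x : ZMod p, ZMod.stdAddChar (t * x ^ 3)

theorem aux_orth {p : ℕ} [Fact p.Prime] (t : ZMod p) :
    ∑ a : ZMod p, (ZMod.stdAddChar (a * t) : ℂ) = if t = 0 then (p : ℂ) else 0 := by
  have := AddChar.sum_mulShift t (ZMod.isPrimitive_stdAddChar p)
  simpa [ZMod.card] using this

open Finset Classical in
theorem aux_S_moment {p : ℕ} [Fact p.Prime] : ∑ t : ZMod p, ‖AuxS p t‖ ^ 2 ≤ 3 * (p : ℝ) ^ 2 := by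
  have h1 : ((∑ t : ZMod p, ‖AuxS p t‖ ^ 2 : ℝ) : ℂ) =
      ∑ y : ZMod p, ∑ x : ZMod p, if x ^ 3 - y ^ 3 = 0 then (p : ℂ) else 0 := by
    push_cast
    calc ∑ t : ZMod p, ((‖AuxS p t‖ : ℂ)) ^ 2
        = ∑ t : ZMod p, ∑ y : ZMod p, ∑ x : ZMod p,
            (ZMod.stdAddChar (t * (x ^ 3 - y ^ 3)) : ℂ) := by
          refine Finset.sum_congr rfl fun t _ => ?_
          rw [← Complex.mul_conj', AuxS, map_sum, mul_comm, Finset.sum_mul]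
          refine Finset.sum_congr rfl fun y _ => ?_
          rw [Finset.mul_sum]
          refine Finset.sum_congr rfl fun x _ => ?_
          rw [← AddChar.map_neg_eq_conj, ← AddChar.map_add_eq_mul]
          congr 1; ring
      _ = _ := by
          rw [Finset.sum_comm]
          refine Finset.sum_congr rfl fun y _ => ?_
          rw [Finset.sum_comm]
          refine Finset.sum_congr rfl fun x _ => ?_
          exact aux_orth _
  have h2 : (∑ t : ZMod p, ‖AuxS p t‖ ^ 2 : ℝ) =
      ∑ y : ZMod p, ∑ x : ZMod p, if x ^ 3 - y ^ 3 = 0 then (p : ℝ) else 0 := by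
    apply Complex.ofReal_injective
    rw [h1]; push_cast
    simp only [apply_ite Complex.ofReal, Complex.ofReal_natCast, Complex.ofReal_zero]
  rw [h2]
  calc _ ≤ ∑ y : ZMod p, (3 * (p : ℝ)) := by
        refine Finset.sum_le_sum fun y _ => ?_
        simp only [sub_eq_zero]
        rw [← Finset.sum_filter, Finset.sum_const, nsmul_eq_mul]
        gcongr
        exact_mod_cast aux_cube_fiber (y ^ 3)
    _ = _ := by simp [ZMod.card]; ring

open Finset Classical in
theorem aux_S_bound {p : ℕ} [Fact p.Prime] (h3 : 3 < p) (t : ZMod p) (ht : t ≠ 0) :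
    ‖AuxS p t‖ ≤ 4 * √p := by
  have hinv : ∀ u : ZMod p, u ≠ 0 → AuxS p (t * u ^ 3) = AuxS p t := by
    intro u hu
    unfold AuxS
    refine Fintype.sum_equiv (Equiv.mulLeft₀ u hu) _ _ fun x => ?_
    change _ = (ZMod.stdAddChar (t * (u * x) ^ 3) : ℂ)
    congr 1; ring
  have h1 : ∑ u : ZMod p, ‖AuxS p (t * u ^ 3)‖ ^ 2 ≤ 3 * ∑ s : ZMod p, ‖AuxS p s‖ ^ 2 := by
    rw [Finset.mul_sum, ← Finset.sum_fiberwise (s := univ) (g := fun u : ZMod p => t * u ^ 3)]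
    refine Finset.sum_le_sum fun s _ => ?_
    rw [Finset.sum_congr rfl (g := fun _ => ‖AuxS p s‖ ^ 2)
      (by intro u hu; rw [(Finset.mem_filter.1 hu).2]), Finset.sum_const, nsmul_eq_mul]
    gcongr
    have : #{u : ZMod p | t * u ^ 3 = s} ≤ 3 := by
      refine le_trans (Finset.card_le_card ?_) (aux_cube_fiber (s / t))
      intro u hu
      simp only [mem_filter, mem_univ, true_and] at hu ⊢
      rw [eq_div_iff ht, mul_comm]; exact hu
    exact_mod_cast this
  have h2 : ((p : ℝ) - 1) * ‖AuxS p t‖ ^ 2 ≤ ∑ u : ZMod p, ‖AuxS p (t * u ^ 3)‖ ^ 2 := by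
    rw [← Finset.add_sum_erase univ _ (mem_univ (0 : ZMod p))]
    rw [Finset.sum_congr rfl (s₁ := univ.erase (0 : ZMod p)) (g := fun _ => ‖AuxS p t‖ ^ 2)
      (by intro u hu; rw [hinv u (Finset.ne_of_mem_erase hu)]), Finset.sum_const, nsmul_eq_mul,
      Finset.card_erase_of_mem (mem_univ _), Finset.card_univ, ZMod.card,
      Nat.cast_sub (by omega)]
    have := sq_nonneg ‖AuxS p (t * 0 ^ 3)‖
    push_cast
    linarith
  have h4 := aux_S_moment (p := p)
  have hp : (4 : ℝ) ≤ p := by exact_mod_cast h3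
  have h5 : ‖AuxS p t‖ ^ 2 ≤ 16 * p := by
    have : ((p : ℝ) - 1) * ‖AuxS p t‖ ^ 2 ≤ 9 * (p:ℝ) ^ 2 := by linarith
    by_contra hc
    push Not at hc
    have := mul_lt_mul_of_pos_left hc (show (0:ℝ) < p - 1 by linarith)
    nlinarith
  apply le_of_sq_le_sq _ (by positivity) |> fun h => h
  rw [mul_pow, Real.sq_sqrt (by positivity)]
  linarith

theorem aux_char_sum {p : ℕ} [Fact p.Prime] (s : Finset (Fin 16)) (f : Fin 16 → ZMod p) :
    (ZMod.stdAddChar (∑ i ∈ s, f i) : ℂ) = ∏ i ∈ s, ZMod.stdAddChar (f i) := by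
  classical
  induction s using Finset.induction_on with
  | empty => simp
  | insert a s ha ih => rw [Finset.sum_insert ha, Finset.prod_insert ha, AddChar.map_add_eq_mul, ih]

open Finset Classical in
theorem aux_count {p : ℕ} [Fact p.Prime] (c d : Fin 16 → ZMod p) :
    ((#{x : Fin 16 → ZMod p | ∑ i, c i * x i ^ 3 = 0 ∧ ∑ i, d i * x i ^ 3 = 0} : ℕ) : ℂ) * p ^ 2
      = ∑ ab : ZMod p × ZMod p, ∏ i, AuxS p (ab.1 * c i + ab.2 * d i) := by
  have hprod : ∀ ab : ZMod p × ZMod p, ∏ i, AuxS p (ab.1 * c i + ab.2 * d i) =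
      ∑ x : Fin 16 → ZMod p, (ZMod.stdAddChar (ab.1 * ∑ i, c i * x i ^ 3) : ℂ) *
        ZMod.stdAddChar (ab.2 * ∑ i, d i * x i ^ 3) := by
    intro ab
    unfold AuxS
    rw [Finset.prod_univ_sum, Fintype.piFinset_univ]
    refine Finset.sum_congr rfl fun x _ => ?_
    rw [← AddChar.map_add_eq_mul, ← aux_char_sum]
    congr 1
    rw [Finset.mul_sum, Finset.mul_sum, ← Finset.sum_add_distrib]
    refine Finset.sum_congr rfl fun i _ => ?_
    ring
  rw [Finset.sum_congr rfl (fun ab _ => hprod ab), Finset.sum_comm]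
  have : ∀ x : Fin 16 → ZMod p, ∑ ab : ZMod p × ZMod p,
      (ZMod.stdAddChar (ab.1 * ∑ i, c i * x i ^ 3) : ℂ) *
        ZMod.stdAddChar (ab.2 * ∑ i, d i * x i ^ 3) =
      if (∑ i, c i * x i ^ 3 = 0 ∧ ∑ i, d i * x i ^ 3 = 0) then (p : ℂ) ^ 2 else 0 := by
    intro x
    rw [Fintype.sum_prod_type]
    simp only []
    rw [← Finset.sum_mul_sum, aux_orth, aux_orth]
    by_cases h1 : ∑ i, c i * x i ^ 3 = 0 <;> by_cases h2 : ∑ i, d i * x i ^ 3 = 0 <;>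
      simp [h1, h2, pow_two]
  rw [Finset.sum_congr rfl (fun x _ => this x), ← Finset.sum_filter, Finset.sum_const, nsmul_eq_mul]

open Finset Classical in
theorem aux_count_lower {p : ℕ} [Fact p.Prime] (h3 : 3 < p) (c d : Fin 16 → ZMod p)
    (h : ∀ l m : ZMod p, ¬(l = 0 ∧ m = 0) → #{i | l * c i + m * d i = 0} ≤ 9) :
    (p : ℝ) ^ 14 - 4 ^ 16 * (p : ℝ) ^ 13 ≤
      (#{x : Fin 16 → ZMod p | ∑ i, c i * x i ^ 3 = 0 ∧ ∑ i, d i * x i ^ 3 = 0} : ℕ) := by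
  have hc := aux_count c d
  set N := #{x : Fin 16 → ZMod p | ∑ i, c i * x i ^ 3 = 0 ∧ ∑ i, d i * x i ^ 3 = 0}
  have hp0 : (4 : ℝ) ≤ p := by exact_mod_cast h3
  have hS0 : AuxS p 0 = p := by simp [AuxS, ZMod.card]
  rw [← Finset.add_sum_erase univ _ (mem_univ (0 : ZMod p × ZMod p))] at hc
  simp only [Prod.fst_zero, Prod.snd_zero, zero_mul, add_zero, hS0, prod_const, card_univ,
    Fintype.card_fin] at hc
  have hterm : ∀ ab ∈ univ.erase (0 : ZMod p × ZMod p),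
      ‖∏ i, AuxS p (ab.1 * c i + ab.2 * d i)‖ ≤ 4 ^ 16 * (p : ℝ) ^ 13 := by
    intro ab hab
    have hab' : ¬ (ab.1 = 0 ∧ ab.2 = 0) := fun h => Finset.ne_of_mem_erase hab (Prod.ext h.1 h.2)
    have hcard := h _ _ hab'
    rw [norm_prod]
    have hs1 : (1 : ℝ) ≤ √p := by rw [Real.one_le_sqrt]; linarith
    have hsq : √(p:ℝ) ^ 2 = p := Real.sq_sqrt (by positivity)
    calc ∏ i, ‖AuxS p (ab.1 * c i + ab.2 * d i)‖
        ≤ ∏ i, ((4 * √p) * if ab.1 * c i + ab.2 * d i = 0 then √p else 1) := by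
          refine Finset.prod_le_prod (fun _ _ => norm_nonneg _) fun i _ => ?_
          split_ifs with h0
          · rw [h0, hS0, Complex.norm_natCast]
            nlinarith
          · rw [mul_one]; exact aux_S_bound h3 _ h0
      _ = (4 * √p) ^ 16 * √p ^ #{i | ab.1 * c i + ab.2 * d i = 0} := by
          rw [Finset.prod_mul_distrib, Finset.prod_ite]; simp
      _ ≤ (4 * √p) ^ 16 * √p ^ 10 := by
          gcongr
          omega
      _ = 4 ^ 16 * (√p ^ 2) ^ 13 := by ring
      _ = _ := by rw [hsq]
  have hsum := norm_sum_le_of_le _ hterm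
  rw [eq_sub_iff_add_eq'.2 hc.symm] at hsum
  rw [Finset.sum_const, nsmul_eq_mul, Finset.card_erase_of_mem (mem_univ _), card_univ,
    Fintype.card_prod, ZMod.card] at hsum
  have e : (N : ℂ) * p ^ 2 - p ^ 16 = (((N : ℝ) * p ^ 2 - p ^ 16 : ℝ) : ℂ) := by push_cast; ring
  rw [e, Complex.norm_real, Real.norm_eq_abs] at hsum
  have h6 := (abs_le.1 hsum).1
  have h7 : ((p * p - 1 : ℕ) : ℝ) ≤ (p : ℝ) ^ 2 := by
    rw [pow_two]; exact_mod_cast Nat.sub_le _ _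
  have h8 : ((p * p - 1 : ℕ) : ℝ) * (4 ^ 16 * (p : ℝ) ^ 13) ≤ (p : ℝ) ^ 2 * (4 ^ 16 * (p : ℝ) ^ 13) := by
    gcongr
  have h9 : ((p : ℝ) ^ 14 - 4 ^ 16 * (p : ℝ) ^ 13) * p ^ 2 ≤ N * p ^ 2 := by
    have : ((p : ℝ) ^ 14 - 4 ^ 16 * (p : ℝ) ^ 13) * p ^ 2 = p ^ 16 - p ^ 2 * (4 ^ 16 * (p : ℝ) ^ 13) := by ring
    rw [this]; linarith
  exact le_of_mul_le_mul_right h9 (by positivity)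

open Finset Classical in
theorem aux_supp_count {p : ℕ} [Fact p.Prime] :
    #{x : Fin 16 → ZMod p | #{i | x i ≠ 0} ≤ 9} ≤ 2 ^ 16 * p ^ 9 := by
  have hp : 1 ≤ p := (Fact.out : p.Prime).one_le
  calc _ ≤ #((univ.filter fun s : Finset (Fin 16) => #s ≤ 9).biUnion fun s =>
        Fintype.piFinset fun i => if i ∈ s then (univ : Finset (ZMod p)) else {0}) := by
        apply Finset.card_le_card
        intro x hx
        simp only [mem_filter, mem_univ, true_and] at hx
        simp only [mem_biUnion, mem_filter, mem_univ, true_and, Fintype.mem_piFinset]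
        refine ⟨_, hx, fun i => ?_⟩
        by_cases h : x i = 0 <;> simp [h]
    _ ≤ #(univ.filter fun s : Finset (Fin 16) => #s ≤ 9) * p ^ 9 := by
        apply Finset.card_biUnion_le_card_mul
        intro s hs
        simp only [mem_filter, mem_univ, true_and] at hs
        rw [Fintype.card_piFinset]
        have : ∀ i, #(if i ∈ s then (univ : Finset (ZMod p)) else {0}) = if i ∈ s then p else 1 := by
          intro i; split_ifs <;> simp [ZMod.card]
        rw [Finset.prod_congr rfl fun i _ => this i, Finset.prod_ite]
        simp only [prod_const, one_pow, mul_one]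
        apply Nat.pow_le_pow_right hp
        simpa using hs
    _ ≤ 2 ^ 16 * p ^ 9 := by
        gcongr
        refine (Finset.card_le_univ _).trans ?_
        simp

open Finset Classical in
theorem aux_case1 {p : ℕ} [Fact p.Prime] (h3 : 3 < p) (c d : Fin 16 → ℤ)
    (h : ∀ l m : ZMod p, ¬(l = 0 ∧ m = 0) →
            Nat.card {i : Fin 16 // l * (c i : ZMod p) + m * (d i : ZMod p) = 0} ≤ 9) :
    (p : ℝ) ^ 14 - 4 ^ 17 * (p : ℝ) ^ 13 ≤ (Nat.card {x // AuxNS p c d x} : ℝ) := by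
  have h' : ∀ l m : ZMod p, ¬(l = 0 ∧ m = 0) →
      #{i | l * (c i : ZMod p) + m * (d i : ZMod p) = 0} ≤ 9 := by
    intro l m hlm
    have := h l m hlm
    rwa [Nat.card_eq_fintype_card, Fintype.card_subtype] at this
  have h1 := aux_count_lower h3 (fun i => (c i : ZMod p)) (fun i => (d i : ZMod p)) h'
  have h2 : #{x : Fin 16 → ZMod p | ∑ i, (c i : ZMod p) * x i ^ 3 = 0 ∧ ∑ i, (d i : ZMod p) * x i ^ 3 = 0}
      ≤ #{x | AuxNS p c d x} + #{x : Fin 16 → ZMod p | #{i | x i ≠ 0} ≤ 9} := by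
    refine le_trans (Finset.card_le_card ?_) (Finset.card_union_le _ _)
    intro x hx
    simp only [mem_filter, mem_univ, true_and, mem_union] at hx ⊢
    by_contra hcon
    push Not at hcon
    obtain ⟨hns, hs⟩ := hcon
    have hdet : ∀ i j, x i ≠ 0 → x j ≠ 0 → ((c i * d j - c j * d i : ℤ) : ZMod p) = 0 := by
      intro i j hi hj
      by_contra hd
      exact hns ⟨hx.1, hx.2, i, j, hd, hi, hj⟩
    have key : ∃ l m : ZMod p, ¬ (l = 0 ∧ m = 0) ∧
        ∀ i, x i ≠ 0 → l * (c i : ZMod p) + m * (d i : ZMod p) = 0 := by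
      by_cases hall : ∀ i, x i ≠ 0 → (c i : ZMod p) = 0 ∧ (d i : ZMod p) = 0
      · exact ⟨1, 0, by simp, fun i hi => by simp [(hall i hi).1]⟩
      · push Not at hall
        obtain ⟨i, hi, hcd⟩ := hall
        refine ⟨d i, -c i, ?_, ?_⟩
        · rintro ⟨h1, h2⟩
          exact hcd (neg_eq_zero.1 h2) h1
        · intro j hj
          have := hdet i j hi hj
          push_cast at this
          linear_combination -this
    obtain ⟨l, m, hlm, hall⟩ := key
    have := h' l m hlm
    have hle : #{i | x i ≠ 0} ≤ #{i | l * (c i : ZMod p) + m * (d i : ZMod p) = 0} := by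
      apply Finset.card_le_card
      intro i hi
      simp only [mem_filter, mem_univ, true_and] at hi ⊢
      exact hall i hi
    omega
  have h4 := aux_supp_count (p := p)
  rw [Nat.card_eq_fintype_card, Fintype.card_subtype]
  have hp0 : (1 : ℝ) ≤ p := by exact_mod_cast (by omega : 1 ≤ p)
  have h5 : (p : ℝ) ^ 9 ≤ p ^ 13 := pow_le_pow_right₀ hp0 (by norm_num)
  have h6 : ((#{x : Fin 16 → ZMod p | ∑ i, (c i : ZMod p) * x i ^ 3 = 0 ∧ ∑ i, (d i : ZMod p) * x i ^ 3 = 0} : ℕ) : ℝ) ≤ (#{x | AuxNS p c d x} : ℕ) + 2 ^ 16 * (p : ℝ) ^ 9 := by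
    exact_mod_cast h2.trans (Nat.add_le_add_left h4 _)
  have h7 := h1.trans h6
  have h8 : (0 : ℝ) ≤ (p:ℝ) ^ 13 := by positivity
  linarith

theorem aux_ker_card {A B : Type*} [AddCommGroup A] [AddCommGroup B] [Finite A] (f : A →+ B)
    (hf : Function.Surjective f) : Nat.card A = Nat.card B * Nat.card {a // f a = 0} := by
  have h := AddSubgroup.card_eq_card_quotient_mul_card_addSubgroup f.ker
  rw [Nat.card_congr (QuotientAddGroup.quotientKerEquivOfSurjective f hf).toEquiv] at h
  exact h

/-- linear functional -/
def auxLin {p : ℕ} (c : Fin 16 → ZMod p) : (Fin 16 → ZMod p) →+ ZMod p where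
  toFun z := ∑ i, c i * z i
  map_zero' := by simp
  map_add' x y := by simp [mul_add, Finset.sum_add_distrib]

theorem auxLin_apply {p : ℕ} (c : Fin 16 → ZMod p) (z) : auxLin c z = ∑ i, c i * z i := rfl

theorem auxLin_single {p : ℕ} (c : Fin 16 → ZMod p) (i : Fin 16) (a : ZMod p) :
    auxLin c (Pi.single i a) = c i * a := by
  simp [auxLin_apply, Pi.single_apply]

open Finset Classical in
theorem aux_ker2 {p : ℕ} [Fact p.Prime] (c d : Fin 16 → ZMod p) {i j : Fin 16}
    (h : c i * d j - c j * d i ≠ 0) : #{z | auxLin c z = 0 ∧ auxLin d z = 0} = p ^ 14 := by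
  have hp : 0 < p := (Fact.out : p.Prime).pos
  have := aux_ker_card ((auxLin c).prod (auxLin d)) (by
    rintro ⟨a, b⟩
    refine ⟨Pi.single i ((a * d j - b * c j) / (c i * d j - c j * d i)) +
      Pi.single j ((c i * b - d i * a) / (c i * d j - c j * d i)), ?_⟩
    simp only [AddMonoidHom.prod_apply, map_add, auxLin_single, Prod.mk_add_mk, Prod.mk.injEq]
    have hD := mul_inv_cancel₀ h
    simp only [div_eq_mul_inv]
    exact ⟨by linear_combination a * hD, by linear_combination b * hD⟩)
  rw [Nat.card_eq_fintype_card, Nat.card_eq_fintype_card, Nat.card_eq_fintype_card,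
    Fintype.card_subtype] at this
  simp only [AddMonoidHom.prod_apply, Prod.mk_eq_zero, Fintype.card_prod, ZMod.card,
    Fintype.card_pi, prod_const, card_univ, Fintype.card_fin] at this
  exact Nat.eq_of_mul_eq_mul_left (Nat.mul_pos hp hp) (by linarith)

open Finset Classical in
theorem aux_ker3 {p : ℕ} [Fact p.Prime] (c d : Fin 16 → ZMod p) {i j k : Fin 16}
    (hji : j ≠ i) (hki : k ≠ i)
    (h : c j * d k - c k * d j ≠ 0) :
    #{z | auxLin c z = 0 ∧ auxLin d z = 0 ∧ z i = 0} = p ^ 13 := by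
  have hp : 0 < p := (Fact.out : p.Prime).pos
  have := aux_ker_card ((auxLin c).prod ((auxLin d).prod (Pi.evalAddMonoidHom (fun _ => ZMod p) i))) (by
    rintro ⟨a, b, e⟩
    refine ⟨Pi.single j (((a - c i * e) * d k - (b - d i * e) * c k) / (c j * d k - c k * d j)) +
      Pi.single k ((c j * (b - d i * e) - d j * (a - c i * e)) / (c j * d k - c k * d j)) +
      Pi.single i e, ?_⟩
    simp only [AddMonoidHom.prod_apply, map_add, auxLin_single, Prod.mk_add_mk, Prod.mk.injEq,
      Pi.evalAddMonoidHom_apply, Pi.single_eq_same, Pi.single_eq_of_ne hji.symm,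
      Pi.single_eq_of_ne hki.symm]
    have hD := mul_inv_cancel₀ h
    simp only [div_eq_mul_inv]
    exact ⟨by linear_combination (a - c i * e) * hD, by linear_combination (b - d i * e) * hD,
      by simp⟩)
  rw [Nat.card_eq_fintype_card, Nat.card_eq_fintype_card, Nat.card_eq_fintype_card,
    Fintype.card_subtype] at this
  simp only [AddMonoidHom.prod_apply, Prod.mk_eq_zero, Fintype.card_prod, ZMod.card,
    Fintype.card_pi, prod_const, card_univ, Fintype.card_fin, Pi.evalAddMonoidHom_apply] at this
  exact Nat.eq_of_mul_eq_mul_left (Nat.mul_pos hp (Nat.mul_pos hp hp)) (by linarith)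

theorem aux_cube_surj {p : ℕ} [Fact p.Prime] (h : p % 3 = 2) (a : ZMod p) : ∃ b, b ^ 3 = a := by
  by_cases ha : a = 0
  · exact ⟨0, by simp [ha]⟩
  · refine ⟨a ^ ((2 * p - 1) / 3), ?_⟩
    have hp : 2 ≤ p := (Fact.out : p.Prime).two_le
    rw [← pow_mul, show (2 * p - 1) / 3 * 3 = (p - 1) + (p - 1) + 1 by omega, pow_add, pow_add,
      ZMod.pow_card_sub_one_eq_one ha]
    simp

open Finset Classical in
theorem aux_case2 {p : ℕ} [Fact p.Prime] (h2 : p % 3 = 2) (c d : Fin 16 → ℤ)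
    (h : ∃ i j k : Fin 16,
            ((c i * d j - c j * d i : ℤ) : ZMod p) ≠ 0 ∧
            ((c i * d k - c k * d i : ℤ) : ZMod p) ≠ 0 ∧
            ((c j * d k - c k * d j : ℤ) : ZMod p) ≠ 0) :
    (p : ℝ) ^ 14 - 2 * (p : ℝ) ^ 13 ≤ (Nat.card {x // AuxNS p c d x} : ℝ) := by
  obtain ⟨i, j, k, hij, hik, hjk⟩ := h
  have nij : i ≠ j := by rintro rfl; simp at hij
  have nik : i ≠ k := by rintro rfl; simp at hik
  have njk : j ≠ k := by rintro rfl; simp at hjk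
  set c' : Fin 16 → ZMod p := fun i => (c i : ZMod p) with hc'
  set d' : Fin 16 → ZMod p := fun i => (d i : ZMod p) with hd'
  have e1 := aux_ker2 c' d' (i := i) (j := j) (by simpa [hc', hd'] using hij)
  have e2 := aux_ker3 c' d' (i := i) (j := j) (k := k) nij.symm nik.symm (by simpa [hc', hd'] using hjk)
  have e3 := aux_ker3 c' d' (i := j) (j := i) (k := k) nij njk.symm (by simpa [hc', hd'] using hik)
  have hle : #{z | auxLin c' z = 0 ∧ auxLin d' z = 0} ≤ #{x | AuxNS p c d x} +
      #{z | auxLin c' z = 0 ∧ auxLin d' z = 0 ∧ z i = 0} +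
      #{z | auxLin c' z = 0 ∧ auxLin d' z = 0 ∧ z j = 0} := by
    calc _ ≤ #(({x | AuxNS p c d x} : Finset (Fin 16 → ZMod p)).image (fun x l => x l ^ 3) ∪
          ({z | auxLin c' z = 0 ∧ auxLin d' z = 0 ∧ z i = 0} : Finset (Fin 16 → ZMod p)) ∪
          ({z | auxLin c' z = 0 ∧ auxLin d' z = 0 ∧ z j = 0} : Finset (Fin 16 → ZMod p))) := by
          apply Finset.card_le_card
          intro z hz
          simp only [mem_filter, mem_univ, true_and, mem_union, mem_image] at hz ⊢
          by_cases hzi : z i = 0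
          · exact Or.inl (Or.inr ⟨hz.1, hz.2, hzi⟩)
          by_cases hzj : z j = 0
          · exact Or.inr ⟨hz.1, hz.2, hzj⟩
          refine Or.inl (Or.inl ?_)
          choose r hr using aux_cube_surj h2
          refine ⟨fun l => r (z l), ⟨?_, ?_, i, j, hij, ?_, ?_⟩, ?_⟩
          · simpa only [hr, auxLin_apply] using hz.1
          · simpa only [hr, auxLin_apply] using hz.2
          · intro h0; apply hzi; rw [← hr (z i)]
            simp only at h0
            rw [h0]; simp
          · intro h0; apply hzj; rw [← hr (z j)]
            simp only at h0
            rw [h0]; simp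
          · funext l; exact hr _
      _ ≤ _ := by
          refine (Finset.card_union_le _ _).trans (Nat.add_le_add_right ?_ _)
          refine (Finset.card_union_le _ _).trans (Nat.add_le_add_right ?_ _)
          exact Finset.card_image_le
  rw [e1, e2, e3] at hle
  rw [Nat.card_eq_fintype_card, Fintype.card_subtype]
  have : (p : ℝ) ^ 14 ≤ (#{x | AuxNS p c d x} : ℕ) + (p : ℝ) ^ 13 + (p : ℝ) ^ 13 := by
    exact_mod_cast hle
  linarith

/-- Lower bound `ρ(p^k) ≥ p^{14k}(1 − C/p)` for all primes `p ≥ p₀`, under the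
`M`-good-type conditions at `p`. -/
theorem rho_pk_lower_bound_large_primes :
    ∃ p₀ : ℕ, p₀.Prime ∧ 3 < p₀ ∧
      ∃ C : ℝ, 0 < C ∧
        ∀ (p : ℕ) (c d : Fin 16 → ℤ),
          p.Prime → p₀ ≤ p →
          (p % 3 = 1 → ∀ l m : ZMod p, ¬(l = 0 ∧ m = 0) →
            Nat.card {i : Fin 16 // l * (c i : ZMod p) + m * (d i : ZMod p) = 0} ≤ 9) →
          (p % 3 = 2 → ∃ i j k : Fin 16,
            ((c i * d j - c j * d i : ℤ) : ZMod p) ≠ 0 ∧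
            ((c i * d k - c k * d i : ℤ) : ZMod p) ≠ 0 ∧
            ((c j * d k - c k * d j : ℤ) : ZMod p) ≠ 0) →
          ∀ k : ℕ, 1 ≤ k →
            (p : ℝ) ^ (14 * k) * (1 - C / (p : ℝ)) ≤
              (Nat.card {x : Fin 16 → ZMod (p ^ k) //
                (∑ i, (c i : ZMod (p ^ k)) * x i ^ 3) = 0 ∧
                (∑ i, (d i : ZMod (p ^ k)) * x i ^ 3) = 0} : ℝ) := by
  refine ⟨5, by norm_num, by norm_num, 4 ^ 17, by norm_num, ?_⟩
  intro p c d hp h5 h1 h2 k hk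
  obtain ⟨k, rfl⟩ : ∃ m, k = m + 1 := ⟨k - 1, by omega⟩
  have hfact : Fact p.Prime := ⟨hp⟩
  have hp0 : (0 : ℝ) < p := by exact_mod_cast hp.pos
  have hN : (p : ℝ) ^ 14 - 4 ^ 17 * (p : ℝ) ^ 13 ≤ (Nat.card {x // AuxNS p c d x} : ℝ) := by
    have hcases : p % 3 = 0 ∨ p % 3 = 1 ∨ p % 3 = 2 := by omega
    rcases hcases with h | h | h
    · exfalso
      have := (Nat.prime_dvd_prime_iff_eq Nat.prime_three hp).1 (Nat.dvd_of_mod_eq_zero h)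
      omega
    · exact aux_case1 (by omega) c d (h1 h)
    · refine le_trans ?_ (aux_case2 h c d (h2 h))
      have : (0 : ℝ) ≤ (p : ℝ) ^ 13 := by positivity
      linarith
  have hH := (Nat.cast_le (α := ℝ)).2 (aux_hensel (k := k) hp (by omega) c d)
  refine le_trans ?_ hH
  push_cast
  calc (p : ℝ) ^ (14 * (k + 1)) * (1 - 4 ^ 17 / (p : ℝ))
      = ((p : ℝ) ^ k) ^ 14 * ((p : ℝ) ^ 14 - 4 ^ 17 * (p : ℝ) ^ 13) := by
        field_simp
        ring
    _ ≤ _ := by gcongr
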